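/- arXiv:0712.1208 — 2 statements merged into one kernel-verified Lean document; each statement's English description precedes it below -/
import Mathlib

section
/- Let g : (0,∞) → ℝ be a standard-type function, let D = diag(λ₁,…,λₙ) be a diagonal density matrix with all λᵢ > 0, and let A be a self-adjoint n×n complex matrix. Then qCov^g_D(A,A) ≥ 0, and qCov^g_D(A,A) = 0 if and only if A = (Tr(DA))·I, where I is the n×n identity matrix. -/
open scoped BigOperators

noncomputable section

/-- A standard-type function: continuous, non-decreasing and concave on `(0,∞)`,
positive, with `g 1 = 1` and the symmetry `g t = t * g (1/t)`. -/
def StandardType (g : ℝ → ℝ) : Prop :=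
  ContinuousOn g (Set.Ioi 0) ∧ MonotoneOn g (Set.Ioi 0) ∧
  ConcaveOn ℝ (Set.Ioi 0) g ∧ (∀ t : ℝ, 0 < t → 0 < g t) ∧
  g 1 = 1 ∧ ∀ t : ℝ, 0 < t → g t = t * g (1 / t)

/-- The mean associated to `g`: `M_g(a,b) = b * g (a/b)`. -/
def Mmean (g : ℝ → ℝ) (a b : ℝ) : ℝ := b * g (a / b)

theorem qCov_nonneg_and_eq_zero_iff
    {n : ℕ} (g : ℝ → ℝ) (hg : StandardType g)
    (lam : Fin n → ℝ) (hlam : ∀ i, 0 < lam i) (hsum : ∑ i, lam i = 1)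
    (A : Matrix (Fin n) (Fin n) ℂ) (hA : A.IsHermitian) :
    0 ≤ (∑ i, ∑ j, Mmean g (lam i) (lam j) * ‖A i j‖ ^ 2)
        - (∑ i, lam i * (A i i).re) ^ 2 ∧
    ((∑ i, ∑ j, Mmean g (lam i) (lam j) * ‖A i j‖ ^ 2)
        - (∑ i, lam i * (A i i).re) ^ 2 = 0 ↔
      A = (∑ i, (lam i : ℂ) * A i i) • (1 : Matrix (Fin n) (Fin n) ℂ)) := by
  obtain ⟨-, -, -, hpos, h1, -⟩ := hg
  have hM : ∀ i j, 0 < Mmean g (lam i) (lam j) := fun i j =>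
    mul_pos (hlam j) (hpos _ (div_pos (hlam i) (hlam j)))
  have hMd : ∀ i, Mmean g (lam i) (lam i) = lam i := fun i => by
    unfold Mmean
    rw [div_self (hlam i).ne', h1, mul_one]
  have hre : ∀ i, A i i = (((A i i).re : ℝ) : ℂ) := fun i => (hA.coe_re_apply_self i).symm
  obtain ⟨m, hm⟩ : ∃ m, m = ∑ i, lam i * (A i i).re := ⟨_, rfl⟩
  have htr : (∑ i, (lam i : ℂ) * A i i) = (m : ℂ) := by
    rw [hm]
    push_cast
    exact Finset.sum_congr rfl fun i _ => by rw [← hre i]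
  have hvar : (∑ i, lam i * ((A i i).re - m) ^ 2) = (∑ i, lam i * (A i i).re ^ 2) - m ^ 2 := by
    have : ∀ i, lam i * ((A i i).re - m) ^ 2
        = lam i * (A i i).re ^ 2 - 2 * m * (lam i * (A i i).re) + m ^ 2 * lam i :=
      fun i => by ring
    simp only [this, Finset.sum_add_distrib, Finset.sum_sub_distrib, ← Finset.mul_sum, ← hm, hsum]
    ring
  obtain ⟨B, hB⟩ : ∃ B, B = A - (m : ℂ) • (1 : Matrix (Fin n) (Fin n) ℂ) := ⟨_, rfl⟩
  have hterm : ∀ i j, Mmean g (lam i) (lam j) * ‖A i j‖ ^ 2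
      = Mmean g (lam i) (lam j) * ‖B i j‖ ^ 2
        + if i = j then lam i * (A i i).re ^ 2 - lam i * ((A i i).re - m) ^ 2 else 0 := by
    intro i j
    by_cases h : i = j
    · subst h
      have hb : B i i = (((A i i).re - m : ℝ) : ℂ) := by
        rw [hB]
        push_cast
        rw [← hre i]
        simp
      rw [hb, hre i, hMd]
      simp only [Complex.norm_real, Real.norm_eq_abs, sq_abs, if_true, Complex.ofReal_re]
      ring
    · simp [hB, h]
  have key : (∑ i, ∑ j, Mmean g (lam i) (lam j) * ‖A i j‖ ^ 2) - m ^ 2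
      = ∑ i, ∑ j, Mmean g (lam i) (lam j) * ‖B i j‖ ^ 2 := by
    simp only [hterm, Finset.sum_add_distrib, Finset.sum_ite_eq, Finset.mem_univ, if_true,
      Finset.sum_sub_distrib, hvar]
    ring
  have hnn : ∀ i j, 0 ≤ Mmean g (lam i) (lam j) * ‖B i j‖ ^ 2 := fun i j =>
    mul_nonneg (hM i j).le (sq_nonneg _)
  rw [← hm, key, htr, ← sub_eq_zero (a := A), ← hB]
  refine ⟨Finset.sum_nonneg fun i _ => Finset.sum_nonneg fun j _ => hnn i j, fun h => ?_,
    fun h => by simp [h]⟩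
  ext i j
  rw [Finset.sum_eq_zero_iff_of_nonneg
    (fun i _ => Finset.sum_nonneg fun j _ => hnn i j)] at h
  have h2 := h i (Finset.mem_univ i)
  rw [Finset.sum_eq_zero_iff_of_nonneg (fun j _ => hnn i j)] at h2
  have h3 := h2 j (Finset.mem_univ j)
  simpa [(hM i j).ne'] using h3
end
end

section
/- Let g : (0,∞) → ℝ be a standard-type function with g(0) := lim_{t→0+} g(t) ≥ 1/2. Then g(t) = (1+t)/2 for all t > 0. In other words, the only standard-type function g satisfying g(0) ≥ 1/2 is the arithmetic-mean function g(t) = (t+1)/2. -/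
open scoped BigOperators

noncomputable section

theorem standard_g0_ge_half_eq_arith
    (g : ℝ → ℝ) (hg : StandardType g) (g0 : ℝ)
    (hg0 : Filter.Tendsto g (nhdsWithin 0 (Set.Ioi 0)) (nhds g0))
    (hg0half : g0 ≥ 1 / 2) :
    ∀ t : ℝ, 0 < t → g t = (1 + t) / 2 := by
  obtain ⟨hc, -, hcc, -, h1, hsym⟩ := hg
  have low : ∀ t : ℝ, 0 < t → t ≤ 1 → (1 + t) / 2 ≤ g t := by
    intro t ht ht1
    have hca : ContinuousAt g t := hc.continuousAt (Ioi_mem_nhds ht)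
    have hin : Filter.Tendsto (fun s : ℝ => (1 - t) * s + t) (nhdsWithin 0 (Set.Ioi 0)) (nhds t) := by
      have : ContinuousAt (fun s : ℝ => (1 - t) * s + t) 0 := by fun_prop
      have h := this.tendsto
      simp only [mul_zero, zero_add] at h
      exact h.mono_left nhdsWithin_le_nhds
    have hL := hca.tendsto.comp hin
    have hR : Filter.Tendsto (fun s : ℝ => (1 - t) * g s + t) (nhdsWithin 0 (Set.Ioi 0))
        (nhds ((1 - t) * g0 + t)) := (hg0.const_mul (1 - t)).add_const t
    have hle : (1 - t) * g0 + t ≤ g t := by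
      refine le_of_tendsto_of_tendsto hR hL ?_
      filter_upwards [self_mem_nhdsWithin] with s hs
      have := hcc.2 hs (show (1 : ℝ) ∈ Set.Ioi 0 by simp) (sub_nonneg.2 ht1) ht.le (by ring)
      simpa [h1] using this
    nlinarith
  intro t ht
  have ht' : 0 < 1 / t := by positivity
  apply le_antisymm
  · have h := hcc.2 (show t ∈ Set.Ioi 0 from ht) (show 1 / t ∈ Set.Ioi 0 from ht')
      (show 0 ≤ 1 / (1 + t) by positivity) (show 0 ≤ t / (1 + t) by positivity) (by field_simp)
    simp only [smul_eq_mul] at h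
    have e : 1 / (1 + t) * t + t / (1 + t) * (1 / t) = 1 := by field_simp; ring
    have e2 : 1 / (1 + t) * g t + t / (1 + t) * g (1 / t) = 2 * g t / (1 + t) := by
      rw [hsym t ht]; ring
    rw [e, e2, h1, div_le_one (by positivity)] at h
    linarith
  · rcases le_total t 1 with h | h
    · exact low t ht h
    · have h2 := low (1 / t) ht' ((div_le_one ht).2 h)
      rw [hsym t ht]
      calc (1 + t) / 2 = t * ((1 + 1 / t) / 2) := by field_simp; ring
        _ ≤ _ := mul_le_mul_of_nonneg_left h2 ht.le
end
end
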